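/- The iterates of soft zero-sum Markov-game policy iteration with step size η ∈ (0,1] contract toward the equilibrium value v* (the unique fixed point of T) with coefficient (1 − η + γη): for all k ≥ 1, ‖v_k − v*‖_∞ ≤ (1 − η + γη) ‖v_{k−1} − v*‖_∞, where v_k = v^{μ_k,ν_k}. In particular, for η = 1 (standard zero-sum Markov-game policy iteration) the contraction coefficient is γ. -/

import Mathlib

/-!
Write `v = v_k`, `ν = ν_k`, and let `T` be the Shapley operator (`shapley`).

Since `μ_k` is a best response to `ν`, policy improvement (`IsMarkovGame.Tpol_le_of_best`) gives
`T^{μ,ν} v ≤ v` for every `μ`, and hence `T v ≤ v`. The minimax theorem, applied to the stage game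
at every state, says that the minimizing policy `ν'` satisfies `sup_μ T^{μ,ν'} v ≤ T v`
(`IsMarkovGame.iSup_Tpol_le_shapley`). As `T^{μ,·} v` is affine in the adversary's policy,
`T^{μ_{k+1},ν_{k+1}} v ≤ (1-η) v + η T v ≤ v`. So `v` is a supersolution of the Bellman equation
of the new policies, whence `v_{k+1} ≤ v`, and applying the monotone operator
`T^{μ_{k+1},ν_{k+1}}` once more, `v_{k+1} ≤ (1-η) v + η T v`. Subtracting `v* = T v*` and using
that `T` is a `γ`-contraction bounds `v_{k+1} - v*` from above by `(1-η+γη) ‖v - v*‖`. It is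
nonnegative because `T v_{k+1} ≤ v_{k+1}` and `T` is monotone and contracting.

The minimax theorem for a continuous payoff on a product of compact metric spaces is obtained up
to `ε` (`approx_minimax`) from the finite matrix game on fine nets, where it is an instance of
Sion's theorem on simplices. This avoids the weak topology on probability measures.
-/

open MeasureTheory

/-- Expected one-step reward `r^{μ,ν}(s) = ∫_A ∫_B r(s,a,b) dν(s)(b) dμ(s)(a)`. -/
noncomputable def rPol {S A B : Type*} [MeasurableSpace A] [MeasurableSpace B]
    (r : S → A → B → ℝ)
    (μ : S → ProbabilityMeasure A) (ν : S → ProbabilityMeasure B) (s : S) : ℝ :=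
  ∫ a, ∫ b, r s a b ∂(ν s : Measure B) ∂(μ s : Measure A)

/-- Induced stochastic matrix `P^{μ,ν}(s,s') = ∫_A ∫_B P(s'|s,a,b) dν(s)(b) dμ(s)(a)`. -/
noncomputable def Pmat {S A B : Type*} [Fintype S] [MeasurableSpace A] [MeasurableSpace B]
    (P : S → S → A → B → ℝ)
    (μ : S → ProbabilityMeasure A) (ν : S → ProbabilityMeasure B) : Matrix S S ℝ :=
  Matrix.of fun s s' => ∫ a, ∫ b, P s s' a b ∂(ν s : Measure B) ∂(μ s : Measure A)

/-- Fixed-policy Bellman operator `T^{μ,ν} v = r^{μ,ν} + γ P^{μ,ν} v`. -/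
noncomputable def Tpol {S A B : Type*} [Fintype S] [MeasurableSpace A] [MeasurableSpace B]
    (γ : ℝ) (r : S → A → B → ℝ) (P : S → S → A → B → ℝ)
    (μ : S → ProbabilityMeasure A) (ν : S → ProbabilityMeasure B)
    (v : S → ℝ) : S → ℝ :=
  fun s => rPol r μ ν s + γ * (Pmat P μ ν).mulVec v s

/-- Value of the pair of stationary policies: `v^{μ,ν} = Σ_{t≥0} γ^t (P^{μ,ν})^t r^{μ,ν}`. -/
noncomputable def vVal {S A B : Type*} [Fintype S] [DecidableEq S]
    [MeasurableSpace A] [MeasurableSpace B]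
    (γ : ℝ) (r : S → A → B → ℝ) (P : S → S → A → B → ℝ)
    (μ : S → ProbabilityMeasure A) (ν : S → ProbabilityMeasure B) : S → ℝ :=
  ∑' t : ℕ, γ ^ t • ((Pmat P μ ν ^ t).mulVec (rPol r μ ν))

/-! ### Integrals of a continuous kernel against a pair of probability measures -/

section Kernel

variable {A B : Type*}
    [MetricSpace A] [CompactSpace A] [MeasurableSpace A] [BorelSpace A]
    [MetricSpace B] [CompactSpace B] [MeasurableSpace B] [BorelSpace B]

lemma integrable_of_continuous_compact {f : A → ℝ} (hf : Continuous f)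
    (m : Measure A) [IsFiniteMeasure m] : Integrable f m :=
  hf.integrable_of_hasCompactSupport (HasCompactSupport.of_compactSpace f)

lemma continuous_inner_integral {X : Type*} [MetricSpace X] [CompactSpace X] {f : X → B → ℝ}
    (hf : Continuous fun p : X × B => f p.1 p.2) (n : Measure B) [IsFiniteMeasure n] :
    Continuous fun a => ∫ b, f a b ∂n := by
  have h := continuous_parametric_integral_of_continuous (μ := n) (f := f)
    (by simpa [Function.uncurry_def] using hf) (isCompact_univ : IsCompact (Set.univ : Set B))
  simpa using h

lemma integral_swap_of_continuous {f : A → B → ℝ}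
    (hf : Continuous fun p : A × B => f p.1 p.2)
    (m : Measure A) (n : Measure B) [IsFiniteMeasure m] [IsFiniteMeasure n] :
    ∫ a, ∫ b, f a b ∂n ∂m = ∫ b, ∫ a, f a b ∂m ∂n := by
  apply integral_integral_swap
  exact integrable_of_continuous_compact (A := A × B)
    (by simpa [Function.uncurry_def] using hf) _

lemma integral_le_of_le {f : A → ℝ} (hf : Continuous f) (m : Measure A)
    [IsProbabilityMeasure m] {c : ℝ} (h : ∀ a, f a ≤ c) : ∫ a, f a ∂m ≤ c := by
  have := integral_mono (integrable_of_continuous_compact hf m) (integrable_const c) h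
  simpa using this

lemma le_integral_of_le {f : A → ℝ} (hf : Continuous f) (m : Measure A)
    [IsProbabilityMeasure m] {c : ℝ} (h : ∀ a, c ≤ f a) : c ≤ ∫ a, f a ∂m := by
  have := integral_mono (integrable_const c) (integrable_of_continuous_compact hf m) h
  simpa using this

/-- Bounds on a kernel pass to its double integrals, uniformly in the measures. -/
lemma exists_bound_integral {f : A → B → ℝ} (hf : Continuous fun p : A × B => f p.1 p.2) :
    ∃ C : ℝ, ∀ (m : ProbabilityMeasure A) (n : ProbabilityMeasure B),
      |∫ a, ∫ b, f a b ∂(n : Measure B) ∂(m : Measure A)| ≤ C := by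
  obtain ⟨C, hC⟩ := isCompact_univ.exists_bound_of_continuousOn hf.continuousOn
  refine ⟨C, fun m n => ?_⟩
  have hC' : ∀ a b, |f a b| ≤ C := fun a b => hC (a, b) (Set.mem_univ _)
  have hfa : ∀ a, Continuous (f a) := fun a => hf.comp (by fun_prop : Continuous fun b => (a, b))
  rw [abs_le]
  constructor
  · exact le_integral_of_le (continuous_inner_integral hf _) _ fun a =>
      le_integral_of_le (hfa a) _ fun b => (abs_le.1 (hC' a b)).1
  · exact integral_le_of_le (continuous_inner_integral hf _) _ fun a =>
      integral_le_of_le (hfa a) _ fun b => (abs_le.1 (hC' a b)).2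

/-! ### The minimax theorem for continuous kernels on compact spaces -/

/-- Von Neumann's theorem for a finite matrix game: `x` is the mixed strategy of the minimizer,
`y` that of the maximizer, and `w` the value of the game. -/
lemma finite_minimax {ι κ : Type*} [Fintype ι] [Fintype κ] [Nonempty ι] [Nonempty κ]
    (M : ι → κ → ℝ) :
    ∃ y ∈ stdSimplex ℝ ι, ∃ x ∈ stdSimplex ℝ κ, ∃ w : ℝ,
      (∀ j, w ≤ ∑ i, y i * M i j) ∧ ∀ i, ∑ j, x j * M i j ≤ w := by
  classical
  let f : (κ → ℝ) → (ι → ℝ) → ℝ := fun x y => ∑ i, ∑ j, y i * x j * M i j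
  have hx : ∀ y, IsLinearMap ℝ fun x => f x y := fun y =>
    ⟨fun x x' => by simp [f, ← Finset.sum_add_distrib]; congr! 2; ring,
     fun c x => by simp [f, Finset.mul_sum]; congr! 2; ring⟩
  have hy : ∀ x, IsLinearMap ℝ fun y => f x y := fun x =>
    ⟨fun y y' => by simp [f, ← Finset.sum_add_distrib]; congr! 2; ring,
     fun c y => by simp [f, Finset.mul_sum]; congr! 2; ring⟩
  obtain ⟨x, hxX, y, hyY, hs⟩ := Sion.exists_isSaddlePointOn'
    (X := stdSimplex ℝ κ) (Y := stdSimplex ℝ ι) (f := f)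
    ⟨_, single_mem_stdSimplex ℝ (Classical.arbitrary κ)⟩ (isCompact_stdSimplex ℝ κ)
    (fun y _ => Continuous.lowerSemicontinuous (by fun_prop) |>.lowerSemicontinuousOn _)
    (fun y _ => ((hx y).mk' _).convexOn (convex_stdSimplex ℝ κ) |>.quasiconvexOn)
    (convex_stdSimplex ℝ ι) (isCompact_stdSimplex ℝ ι)
    (fun x _ => Continuous.upperSemicontinuous (by fun_prop) |>.upperSemicontinuousOn _)
    (fun x _ => ((hy x).mk' _).concaveOn (convex_stdSimplex ℝ ι) |>.quasiconcaveOn)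
    (convex_stdSimplex ℝ κ)
    ⟨_, single_mem_stdSimplex ℝ (Classical.arbitrary ι)⟩
  refine ⟨y, hyY, x, hxX, f x y, fun j => ?_, fun i => ?_⟩
  · have := hs _ (single_mem_stdSimplex ℝ j) y hyY
    simpa [f, Pi.single_apply] using this
  · have := hs x hxX _ (single_mem_stdSimplex ℝ i)
    simpa [f, Pi.single_apply] using this

/-- A weight vector in the simplex, placed on finitely many points, is a probability measure
whose integrals are the weighted sums. -/
lemma exists_probabilityMeasure_of_weights {ι : Type*} [Fintype ι] (p : ι → A)
    {y : ι → ℝ} (hy : y ∈ stdSimplex ℝ ι) :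
    ∃ m : ProbabilityMeasure A, ∀ g : A → ℝ, Continuous g →
      ∫ a, g a ∂(m : Measure A) = ∑ i, y i * g (p i) := by
  let m : Measure A := ∑ i, ENNReal.ofReal (y i) • Measure.dirac (p i)
  have hm : IsProbabilityMeasure m := by
    constructor
    simp only [m, Measure.finsetSum_apply, Measure.smul_apply, measure_univ, smul_eq_mul, mul_one]
    rw [← ENNReal.ofReal_sum_of_nonneg (fun i _ => hy.1 i), hy.2, ENNReal.ofReal_one]
  refine ⟨⟨m, hm⟩, fun g hg => ?_⟩
  change ∫ a, g a ∂m = _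
  rw [integral_finsetSum_measure]
  · refine Finset.sum_congr rfl fun i _ => ?_
    rw [integral_smul_measure, integral_dirac, ENNReal.toReal_ofReal (hy.1 i), smul_eq_mul]
  · intro i _
    exact (integrable_of_continuous_compact hg _).smul_measure ENNReal.ofReal_ne_top

lemma exists_finite_net (X : Type*) [MetricSpace X] [CompactSpace X] {δ : ℝ} (hδ : 0 < δ) :
    ∃ t : Finset X, ∀ x : X, ∃ y : t, dist x (y : X) < δ := by
  obtain ⟨t, -, ht, hc⟩ := finite_cover_balls_of_compact (isCompact_univ (X := X)) hδ
  refine ⟨ht.toFinset, fun x => ?_⟩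
  obtain ⟨y, hy, hxy⟩ := Set.mem_iUnion₂.1 (hc (Set.mem_univ x))
  exact ⟨⟨y, by simpa using hy⟩, hxy⟩

/-- Approximate minimax theorem: restricting the game to fine finite nets and using uniform
continuity gives strategies that are `ε`-optimal against all pure, hence all mixed, responses. -/
lemma approx_minimax [Nonempty A] [Nonempty B] {f : A → B → ℝ}
    (hf : Continuous fun p : A × B => f p.1 p.2) {ε : ℝ} (hε : 0 < ε) :
    ∃ (m : ProbabilityMeasure A) (n : ProbabilityMeasure B) (w : ℝ),
      (∀ n' : ProbabilityMeasure B,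
        w - ε ≤ ∫ a, ∫ b, f a b ∂(n' : Measure B) ∂(m : Measure A)) ∧
      ∀ m' : ProbabilityMeasure A,
        ∫ a, ∫ b, f a b ∂(n : Measure B) ∂(m' : Measure A) ≤ w + ε := by
  obtain ⟨δ, hδ, hu⟩ := Metric.uniformContinuous_iff.1
    (CompactSpace.uniformContinuous_of_continuous hf) ε hε
  obtain ⟨tA, htA⟩ := exists_finite_net A hδ
  obtain ⟨tB, htB⟩ := exists_finite_net B hδ
  have : Nonempty tA := ⟨(htA (Classical.arbitrary A)).choose⟩
  have : Nonempty tB := ⟨(htB (Classical.arbitrary B)).choose⟩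
  obtain ⟨y, hy, x, hx, w, hw1, hw2⟩ := finite_minimax fun (i : tA) (j : tB) => f i j
  obtain ⟨m, hm⟩ := exists_probabilityMeasure_of_weights (fun i : tA => (i : A)) hy
  obtain ⟨n, hn⟩ := exists_probabilityMeasure_of_weights (fun j : tB => (j : B)) hx
  have hfa : ∀ a, Continuous (f a) := fun a => hf.comp (by fun_prop : Continuous fun b => (a, b))
  have hfb : ∀ b, Continuous fun a => f a b :=
    fun b => hf.comp (by fun_prop : Continuous fun a => (a, b))
  have hf' : Continuous fun p : B × A => f p.2 p.1 := hf.comp continuous_swap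
  refine ⟨m, n, w, fun n' => ?_, fun m' => ?_⟩
  · rw [integral_swap_of_continuous hf]
    refine le_integral_of_le (continuous_inner_integral (f := fun b a => f a b) hf' _) _
      fun b => ?_
    obtain ⟨j, hj⟩ := htB b
    rw [hm _ (hfb b)]
    have h1 : ∀ i : tA, y i * (f i j - ε) ≤ y i * f i b := fun i => by
      refine mul_le_mul_of_nonneg_left ?_ (hy.1 i)
      have := @hu ((i : A), b) ((i : A), (j : B)) (by simp [Prod.dist_eq, hj])
      rw [Real.dist_eq, abs_lt] at this
      linarith [this.1]
    have h2 := Finset.sum_le_sum fun i (_ : i ∈ Finset.univ) => h1 i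
    simp only [mul_sub, Finset.sum_sub_distrib, ← Finset.sum_mul, hy.2] at h2
    linarith [hw1 j]
  · refine integral_le_of_le (continuous_inner_integral hf _) _ fun a => ?_
    obtain ⟨i, hi⟩ := htA a
    rw [hn _ (hfa a)]
    have h1 : ∀ j : tB, x j * f a j ≤ x j * (f i j + ε) := fun j => by
      refine mul_le_mul_of_nonneg_left ?_ (hx.1 j)
      have := @hu (a, (j : B)) ((i : A), (j : B)) (by simp [Prod.dist_eq, hi])
      rw [Real.dist_eq, abs_lt] at this
      linarith [this.2]
    have h2 := Finset.sum_le_sum fun j (_ : j ∈ Finset.univ) => h1 j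
    simp only [mul_add, Finset.sum_add_distrib, ← Finset.sum_mul, hx.2] at h2
    linarith [hw2 i]

end Kernel

/-! ### Bellman operators of the game -/

/-- The standing assumptions on a discounted zero-sum Markov game with discount `γ`, reward `r`
and transition kernel `P`. -/
structure IsMarkovGame {S A B : Type*} [Fintype S] [TopologicalSpace A] [TopologicalSpace B]
    (γ : ℝ) (r : S → A → B → ℝ) (P : S → S → A → B → ℝ) : Prop where
  discount_pos : 0 < γ
  discount_lt_one : γ < 1
  reward_cont : ∀ s, Continuous fun p : A × B => r s p.1 p.2
  trans_cont : ∀ s s', Continuous fun p : A × B => P s s' p.1 p.2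
  trans_nonneg : ∀ s s' a b, 0 ≤ P s s' a b
  trans_sum : ∀ s a b, ∑ s', P s s' a b = 1

/-- The one-step payoff `r(s,a,b) + γ ∑_{s'} P(s'|s,a,b) v(s')` of the matrix game played at `s`
with continuation value `v`. -/
def stagePayoff {S A B : Type*} [Fintype S]
    (γ : ℝ) (r : S → A → B → ℝ) (P : S → S → A → B → ℝ) (v : S → ℝ) (s : S) (a : A) (b : B) : ℝ :=
  r s a b + γ * ∑ s', P s s' a b * v s'

/-- The Shapley operator `T v = sup_μ inf_ν T^{μ,ν} v`. -/
noncomputable def shapley {S A B : Type*} [Fintype S] [MeasurableSpace A] [MeasurableSpace B]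
    (γ : ℝ) (r : S → A → B → ℝ) (P : S → S → A → B → ℝ) (v : S → ℝ) (s : S) : ℝ :=
  ⨆ μ : S → ProbabilityMeasure A, ⨅ ν : S → ProbabilityMeasure B, Tpol γ r P μ ν v s

/-- A function on a finite set dominated by `γ` times every nonnegative constant upper bound of
itself is nonpositive, as one sees at its maximum. -/
lemma nonpos_of_contracting {S : Type*} [Finite S] {γ : ℝ} (hγ : γ < 1) {d : S → ℝ}
    (h : ∀ c : ℝ, 0 ≤ c → (∀ s, d s ≤ c) → ∀ s, d s ≤ γ * c) (s : S) : d s ≤ 0 := by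
  have : Nonempty S := ⟨s⟩
  obtain ⟨t, ht⟩ := Finite.exists_max d
  by_contra! hs
  have hpos : 0 < d t := hs.trans_le (ht s)
  have := h (d t) hpos.le ht t
  nlinarith

section Game

variable {S A B : Type*} [Fintype S]
    [MetricSpace A] [CompactSpace A] [MeasurableSpace A] [BorelSpace A]
    [MetricSpace B] [CompactSpace B] [MeasurableSpace B] [BorelSpace B]
    {γ : ℝ} {r : S → A → B → ℝ} {P : S → S → A → B → ℝ}

lemma IsMarkovGame.continuous_stagePayoff (hG : IsMarkovGame γ r P) (v : S → ℝ) (s : S) :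
    Continuous fun p : A × B => stagePayoff γ r P v s p.1 p.2 := by
  have h1 := hG.reward_cont s
  have h2 := hG.trans_cont s
  unfold stagePayoff
  fun_prop

/-- `T^{μ,ν} v (s)` is the expected payoff of the stage game at `s`. -/
lemma IsMarkovGame.Tpol_eq (hG : IsMarkovGame γ r P) (μ : S → ProbabilityMeasure A)
    (ν : S → ProbabilityMeasure B) (v : S → ℝ) (s : S) :
    Tpol γ r P μ ν v s =
      ∫ a, ∫ b, stagePayoff γ r P v s a b ∂(ν s : Measure B) ∂(μ s : Measure A) := by
  have hra : ∀ a, Continuous (r s a) :=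
    fun a => (hG.reward_cont s).comp (by fun_prop : Continuous fun b => (a, b))
  have hPa : ∀ s' a, Continuous (P s s' a) :=
    fun s' a => (hG.trans_cont s s').comp (by fun_prop : Continuous fun b => (a, b))
  have hR := continuous_inner_integral (hG.reward_cont s) (ν s : Measure B)
  have hQ := fun s' => continuous_inner_integral (hG.trans_cont s s') (ν s : Measure B)
  have hin : ∀ a, ∫ b, stagePayoff γ r P v s a b ∂(ν s : Measure B)
      = ∫ b, r s a b ∂(ν s : Measure B)
        + γ * ∑ s', (∫ b, P s s' a b ∂(ν s : Measure B)) * v s' := by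
    intro a
    simp only [stagePayoff]
    rw [integral_add (integrable_of_continuous_compact (hra a) _)
      (integrable_of_continuous_compact (by have := fun s' => hPa s' a; fun_prop) _),
      integral_const_mul, integral_finsetSum]
    · simp only [integral_mul_const]
    · intro s' _
      exact (integrable_of_continuous_compact (hPa s' a) _).mul_const _
  simp only [hin]
  rw [integral_add (integrable_of_continuous_compact hR _)
      (integrable_of_continuous_compact (by fun_prop) _),
      integral_const_mul, integral_finsetSum]
  · simp only [integral_mul_const]
    rfl
  · intro s' _
    exact (integrable_of_continuous_compact (hQ s') _).mul_const _

lemma IsMarkovGame.exists_bound_Tpol (hG : IsMarkovGame γ r P) (v : S → ℝ) (s : S) :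
    ∃ C : ℝ, ∀ (μ : S → ProbabilityMeasure A) (ν : S → ProbabilityMeasure B),
      |Tpol γ r P μ ν v s| ≤ C := by
  obtain ⟨C, hC⟩ := exists_bound_integral (hG.continuous_stagePayoff v s)
  exact ⟨C, fun μ ν => by rw [hG.Tpol_eq]; exact hC _ _⟩

lemma IsMarkovGame.Pmat_nonneg (hG : IsMarkovGame γ r P) (μ : S → ProbabilityMeasure A)
    (ν : S → ProbabilityMeasure B) (s s' : S) : 0 ≤ Pmat P μ ν s s' :=
  integral_nonneg fun a => integral_nonneg fun b => hG.trans_nonneg s s' a b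

lemma IsMarkovGame.Pmat_sum (hG : IsMarkovGame γ r P) (μ : S → ProbabilityMeasure A)
    (ν : S → ProbabilityMeasure B) (s : S) : ∑ s', Pmat P μ ν s s' = 1 := by
  have hPa : ∀ s' a, Continuous (P s s' a) :=
    fun s' a => (hG.trans_cont s s').comp (by fun_prop : Continuous fun b => (a, b))
  have hQ := fun s' => continuous_inner_integral (hG.trans_cont s s') (ν s : Measure B)
  simp only [Pmat, Matrix.of_apply]
  rw [← integral_finsetSum _ fun s' _ => integrable_of_continuous_compact (hQ s') _]
  have : ∀ a, ∑ s', ∫ b, P s s' a b ∂(ν s : Measure B) = 1 := fun a => by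
    rw [← integral_finsetSum _ fun s' _ => integrable_of_continuous_compact (hPa s' a) _]
    simp [hG.trans_sum]
  simp [this]

/-- Monotonicity and discounting of `T^{μ,ν}` in one statement. -/
lemma IsMarkovGame.Tpol_le_add (hG : IsMarkovGame γ r P) (μ : S → ProbabilityMeasure A)
    (ν : S → ProbabilityMeasure B) {v w : S → ℝ} {c : ℝ} (h : ∀ s, v s ≤ w s + c) (s : S) :
    Tpol γ r P μ ν v s ≤ Tpol γ r P μ ν w s + γ * c := by
  have h1 : (Pmat P μ ν).mulVec v s ≤ (Pmat P μ ν).mulVec w s + c := by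
    calc (Pmat P μ ν).mulVec v s ≤ ∑ s', Pmat P μ ν s s' * (w s' + c) :=
          Finset.sum_le_sum fun s' _ => mul_le_mul_of_nonneg_left (h s') (hG.Pmat_nonneg μ ν s s')
      _ = (Pmat P μ ν).mulVec w s + c := by
          simp only [mul_add, Finset.sum_add_distrib, ← Finset.sum_mul, hG.Pmat_sum, one_mul]
          rfl
  have := mul_le_mul_of_nonneg_left h1 hG.discount_pos.le
  simp only [Tpol]
  linarith

lemma IsMarkovGame.Tpol_mono (hG : IsMarkovGame γ r P) (μ : S → ProbabilityMeasure A)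
    (ν : S → ProbabilityMeasure B) {v w : S → ℝ} (h : ∀ s, v s ≤ w s) (s : S) :
    Tpol γ r P μ ν v s ≤ Tpol γ r P μ ν w s := by
  simpa using hG.Tpol_le_add μ ν (c := 0) (by simpa using h) s

/-- `T^{μ,ν} v (s)` depends on `μ` only through `μ s`. -/
lemma Tpol_congr_left {μ μ' : S → ProbabilityMeasure A} (ν : S → ProbabilityMeasure B)
    (v : S → ℝ) {s : S} (h : μ s = μ' s) : Tpol γ r P μ ν v s = Tpol γ r P μ' ν v s := by
  simp [Tpol, rPol, Pmat, Matrix.mulVec, dotProduct, h]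

/-- `T^{μ,ν}` is affine in the adversary's policy. -/
lemma IsMarkovGame.Tpol_mix (hG : IsMarkovGame γ r P) {η : ℝ} (hη0 : 0 ≤ η) (hη1 : η ≤ 1)
    (μ : S → ProbabilityMeasure A) {ν ν' ν'' : S → ProbabilityMeasure B} {s : S}
    (h : (ν'' s : Measure B) = ENNReal.ofReal (1 - η) • (ν s : Measure B)
      + ENNReal.ofReal η • (ν' s : Measure B)) (v : S → ℝ) :
    Tpol γ r P μ ν'' v s = (1 - η) * Tpol γ r P μ ν v s + η * Tpol γ r P μ ν' v s := by
  have hf := hG.continuous_stagePayoff v s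
  have hfa : ∀ a, Continuous (stagePayoff γ r P v s a) :=
    fun a => hf.comp (by fun_prop : Continuous fun b => (a, b))
  simp only [hG.Tpol_eq, h]
  have hin : ∀ a, ∫ b, stagePayoff γ r P v s a b ∂(ENNReal.ofReal (1 - η) • (ν s : Measure B)
      + ENNReal.ofReal η • (ν' s : Measure B))
      = (1 - η) * ∫ b, stagePayoff γ r P v s a b ∂(ν s : Measure B)
        + η * ∫ b, stagePayoff γ r P v s a b ∂(ν' s : Measure B) := fun a => by
    rw [integral_add_measure
      ((integrable_of_continuous_compact (hfa a) _).smul_measure ENNReal.ofReal_ne_top)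
      ((integrable_of_continuous_compact (hfa a) _).smul_measure ENNReal.ofReal_ne_top),
      integral_smul_measure, integral_smul_measure, ENNReal.toReal_ofReal (by linarith),
      ENNReal.toReal_ofReal hη0, smul_eq_mul, smul_eq_mul]
  simp only [hin]
  rw [integral_add, integral_const_mul, integral_const_mul]
  · exact (integrable_of_continuous_compact (continuous_inner_integral hf _) _).const_mul _
  · exact (integrable_of_continuous_compact (continuous_inner_integral hf _) _).const_mul _

/-! ### The value of a pair of stationary policies -/

/-- The Neumann series `v^{μ,ν}` converges and solves the Bellman equation. -/
lemma IsMarkovGame.vVal_fixed [DecidableEq S] (hG : IsMarkovGame γ r P)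
    (μ : S → ProbabilityMeasure A) (ν : S → ProbabilityMeasure B) (s : S) :
    Tpol γ r P μ ν (vVal γ r P μ ν) s = vVal γ r P μ ν s := by
  set M := Pmat P μ ν with hM
  set ρ := rPol r μ ν with hρ
  have hbd : ∀ t, ‖(M ^ t).mulVec ρ‖ ≤ ‖ρ‖ := by
    intro t
    induction t with
    | zero => simp
    | succ t ih =>
      rw [pow_succ', ← Matrix.mulVec_mulVec]
      refine (pi_norm_le_iff_of_nonneg (norm_nonneg _)).2 fun s => ?_
      calc ‖∑ s', M s s' * (M ^ t).mulVec ρ s'‖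
          ≤ ∑ s', M s s' * ‖ρ‖ := by
            refine (norm_sum_le _ _).trans (Finset.sum_le_sum fun s' _ => ?_)
            rw [norm_mul, Real.norm_of_nonneg (hG.Pmat_nonneg μ ν s s')]
            exact mul_le_mul_of_nonneg_left ((norm_le_pi_norm _ s').trans ih)
              (hG.Pmat_nonneg μ ν s s')
        _ = ‖ρ‖ := by rw [← Finset.sum_mul, hG.Pmat_sum, one_mul]
  have hsum : Summable fun t : ℕ => γ ^ t • ((M ^ t).mulVec ρ) := by
    refine Summable.of_norm_bounded (g := fun t => γ ^ t * ‖ρ‖)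
      ((summable_geometric_of_lt_one hG.discount_pos.le hG.discount_lt_one).mul_right _)
      fun t => ?_
    rw [norm_smul, norm_pow, Real.norm_of_nonneg hG.discount_pos.le]
    exact mul_le_mul_of_nonneg_left (hbd t) (pow_nonneg hG.discount_pos.le t)
  have hmap : M.mulVec (vVal γ r P μ ν) = ∑' t : ℕ, M.mulVec (γ ^ t • ((M ^ t).mulVec ρ)) :=
    (LinearMap.toContinuousLinearMap M.mulVecLin).map_tsum hsum
  have key : vVal γ r P μ ν = ρ + γ • M.mulVec (vVal γ r P μ ν) := by
    rw [hmap, ← tsum_const_smul'']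
    conv_lhs => rw [vVal, ← hM, ← hρ, hsum.tsum_eq_zero_add]
    congr 1
    · simp
    · refine tsum_congr fun t => ?_
      rw [Matrix.mulVec_smul, Matrix.mulVec_mulVec, ← pow_succ', smul_smul, ← pow_succ']
  exact (congrFun key s).symm

/-- A subsolution of the Bellman equation of `(μ,ν)` lies below `v^{μ,ν}`. -/
lemma IsMarkovGame.le_vVal [DecidableEq S] (hG : IsMarkovGame γ r P)
    {μ : S → ProbabilityMeasure A} {ν : S → ProbabilityMeasure B} {w : S → ℝ}
    (h : ∀ s, w s ≤ Tpol γ r P μ ν w s) (s : S) : w s ≤ vVal γ r P μ ν s := by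
  have := nonpos_of_contracting hG.discount_lt_one (d := fun s => w s - vVal γ r P μ ν s)
    (fun c _ hc s => ?_) s
  · simpa using this
  · have h1 := hG.Tpol_le_add μ ν (v := w) (w := vVal γ r P μ ν) (c := c)
      (fun s => by linarith [hc s]) s
    rw [hG.vVal_fixed] at h1
    linarith [h s]

/-- A supersolution of the Bellman equation of `(μ,ν)` lies above `v^{μ,ν}`. -/
lemma IsMarkovGame.vVal_le [DecidableEq S] (hG : IsMarkovGame γ r P)
    {μ : S → ProbabilityMeasure A} {ν : S → ProbabilityMeasure B} {w : S → ℝ}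
    (h : ∀ s, Tpol γ r P μ ν w s ≤ w s) (s : S) : vVal γ r P μ ν s ≤ w s := by
  have := nonpos_of_contracting hG.discount_lt_one (d := fun s => vVal γ r P μ ν s - w s)
    (fun c _ hc s => ?_) s
  · simpa using this
  · have h1 := hG.Tpol_le_add μ ν (v := vVal γ r P μ ν) (w := w) (c := c)
      (fun s => by linarith [hc s]) s
    rw [hG.vVal_fixed] at h1
    linarith [h s]

/-- Policy improvement: the value of a best response `μ` to `ν` satisfies the optimality
inequality `T^{μ',ν} v ≤ v` for all `μ'`, since otherwise switching `μ` at a single state would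
give a strictly better policy. -/
lemma IsMarkovGame.Tpol_le_of_best [DecidableEq S] (hG : IsMarkovGame γ r P)
    {μ : S → ProbabilityMeasure A} {ν : S → ProbabilityMeasure B}
    (hbest : ∀ (μ' : S → ProbabilityMeasure A) (s : S), vVal γ r P μ' ν s ≤ vVal γ r P μ ν s)
    (μ' : S → ProbabilityMeasure A) (s : S) :
    Tpol γ r P μ' ν (vVal γ r P μ ν) s ≤ vVal γ r P μ ν s := by
  by_contra! hlt
  set v := vVal γ r P μ ν with hv
  set μ₁ := Function.update μ s (μ' s) with hμ₁
  have hs : Tpol γ r P μ₁ ν v s = Tpol γ r P μ' ν v s :=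
    Tpol_congr_left ν v (by simp [hμ₁])
  have hsub : ∀ t, v t ≤ Tpol γ r P μ₁ ν v t := by
    intro t
    rcases eq_or_ne t s with rfl | hne
    · exact hs ▸ hlt.le
    · rw [Tpol_congr_left (μ' := μ) ν v (by simp [hμ₁, hne]), hv, hG.vVal_fixed]
  have h1 := hG.Tpol_mono μ₁ ν (hG.le_vVal hsub) s
  rw [hG.vVal_fixed, hs] at h1
  linarith [hbest μ₁ s]

/-! ### The Shapley operator -/

variable [Nonempty A] [Nonempty B]

lemma nonempty_policies (S X : Type*) [MeasurableSpace X] [Nonempty X] :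
    Nonempty (S → ProbabilityMeasure X) :=
  ⟨fun _ => ⟨Measure.dirac (Classical.arbitrary X), inferInstance⟩⟩

lemma IsMarkovGame.iInf_Tpol_le (hG : IsMarkovGame γ r P) (μ : S → ProbabilityMeasure A)
    (ν : S → ProbabilityMeasure B) (v : S → ℝ) (s : S) :
    ⨅ ν' : S → ProbabilityMeasure B, Tpol γ r P μ ν' v s ≤ Tpol γ r P μ ν v s := by
  obtain ⟨C, hC⟩ := hG.exists_bound_Tpol v s
  exact ciInf_le ⟨-C, by rintro _ ⟨ν', rfl⟩; exact (abs_le.1 (hC μ ν')).1⟩ ν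

lemma IsMarkovGame.le_iSup_Tpol (hG : IsMarkovGame γ r P) (μ : S → ProbabilityMeasure A)
    (ν : S → ProbabilityMeasure B) (v : S → ℝ) (s : S) :
    Tpol γ r P μ ν v s ≤ ⨆ μ' : S → ProbabilityMeasure A, Tpol γ r P μ' ν v s := by
  obtain ⟨C, hC⟩ := hG.exists_bound_Tpol v s
  exact le_ciSup (f := fun μ' => Tpol γ r P μ' ν v s)
    ⟨C, by rintro _ ⟨μ', rfl⟩; exact (abs_le.1 (hC μ' ν)).2⟩ μ

lemma IsMarkovGame.iInf_le_shapley (hG : IsMarkovGame γ r P) (μ : S → ProbabilityMeasure A)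
    (v : S → ℝ) (s : S) :
    ⨅ ν : S → ProbabilityMeasure B, Tpol γ r P μ ν v s ≤ shapley γ r P v s := by
  have := nonempty_policies S B
  obtain ⟨C, hC⟩ := hG.exists_bound_Tpol v s
  refine le_ciSup (f := fun μ => ⨅ ν : S → ProbabilityMeasure B, Tpol γ r P μ ν v s) ⟨C, ?_⟩ μ
  rintro _ ⟨μ', rfl⟩
  exact (hG.iInf_Tpol_le μ' (Classical.arbitrary _) v s).trans (abs_le.1 (hC μ' _)).2

lemma IsMarkovGame.shapley_le (hG : IsMarkovGame γ r P) {ν : S → ProbabilityMeasure B}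
    {v : S → ℝ} {s : S} {c : ℝ} (h : ∀ μ, Tpol γ r P μ ν v s ≤ c) : shapley γ r P v s ≤ c := by
  have := nonempty_policies S A
  exact ciSup_le fun μ => (hG.iInf_Tpol_le μ ν v s).trans (h μ)

/-- Monotonicity and discounting of the Shapley operator in one statement. -/
lemma IsMarkovGame.shapley_le_add (hG : IsMarkovGame γ r P) {v w : S → ℝ} {c : ℝ}
    (h : ∀ s, v s ≤ w s + c) (s : S) : shapley γ r P v s ≤ shapley γ r P w s + γ * c := by
  have := nonempty_policies S A
  have := nonempty_policies S B
  refine ciSup_le fun μ => ?_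
  have h1 : (⨅ ν : S → ProbabilityMeasure B, Tpol γ r P μ ν v s) - γ * c
      ≤ ⨅ ν : S → ProbabilityMeasure B, Tpol γ r P μ ν w s :=
    le_ciInf fun ν => by
      linarith [hG.iInf_Tpol_le μ ν v s, hG.Tpol_le_add μ ν h s]
  linarith [hG.iInf_le_shapley μ w s]

/-- The minimax theorem for the stage game: if `ν'` minimizes `sup_μ T^{μ,ν} v (s)` over `ν`,
the minimum does not exceed `T v (s) = sup_μ inf_ν T^{μ,ν} v (s)`. -/
lemma IsMarkovGame.iSup_Tpol_le_shapley (hG : IsMarkovGame γ r P)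
    {ν' : S → ProbabilityMeasure B} {v : S → ℝ} {s : S}
    (hmin : ∀ ν : S → ProbabilityMeasure B,
      (⨆ μ : S → ProbabilityMeasure A, Tpol γ r P μ ν' v s)
        ≤ ⨆ μ : S → ProbabilityMeasure A, Tpol γ r P μ ν v s) :
    (⨆ μ : S → ProbabilityMeasure A, Tpol γ r P μ ν' v s) ≤ shapley γ r P v s := by
  have := nonempty_policies S A
  have := nonempty_policies S B
  refine le_of_forall_pos_le_add fun ε hε => ?_
  obtain ⟨m, n, w, hm, hn⟩ := approx_minimax (hG.continuous_stagePayoff v s) (half_pos hε)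
  have h1 : (⨆ μ : S → ProbabilityMeasure A, Tpol γ r P μ (fun _ => n) v s) ≤ w + ε / 2 :=
    ciSup_le fun μ => by rw [hG.Tpol_eq]; exact hn _
  have h2 : w - ε / 2 ≤ ⨅ ν : S → ProbabilityMeasure B, Tpol γ r P (fun _ => m) ν v s :=
    le_ciInf fun ν => by rw [hG.Tpol_eq]; exact hm _
  linarith [hmin fun _ => n, hG.iInf_le_shapley (fun _ => m) v s]

end Game

theorem stmt11 {S A B : Type*} [Fintype S] [DecidableEq S]
    [MetricSpace A] [CompactSpace A] [Nonempty A] [MeasurableSpace A] [BorelSpace A]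
    [MetricSpace B] [CompactSpace B] [Nonempty B] [MeasurableSpace B] [BorelSpace B]
    (γ : ℝ) (hγ : γ ∈ Set.Ioo (0:ℝ) 1)
    (r : S → A → B → ℝ) (hr : ∀ s, Continuous fun p : A × B => r s p.1 p.2)
    (P : S → S → A → B → ℝ)
    (hPcont : ∀ s s', Continuous fun p : A × B => P s s' p.1 p.2)
    (hP0 : ∀ s s' a b, 0 ≤ P s s' a b) (hP1 : ∀ s s' a b, P s s' a b ≤ 1)
    (hPsum : ∀ s a b, ∑ s', P s s' a b = 1)
    (η : ℝ) (hη : η ∈ Set.Ioc (0:ℝ) 1)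
    (μseq : ℕ → S → ProbabilityMeasure A) (νseq ν'seq : ℕ → S → ProbabilityMeasure B)
    (hμ : ∀ (k : ℕ) (μ : S → ProbabilityMeasure A) (s : S),
        vVal γ r P μ (νseq k) s ≤ vVal γ r P (μseq k) (νseq k) s)
    (hν' : ∀ (k : ℕ) (ν : S → ProbabilityMeasure B) (s : S),
        (⨆ μ : S → ProbabilityMeasure A,
            Tpol γ r P μ (ν'seq k) (vVal γ r P (μseq k) (νseq k)) s)
          ≤ ⨆ μ : S → ProbabilityMeasure A,
            Tpol γ r P μ ν (vVal γ r P (μseq k) (νseq k)) s)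
    (hmix : ∀ (k : ℕ) (s : S), (νseq (k + 1) s : Measure B)
        = ENNReal.ofReal (1 - η) • (νseq k s : Measure B)
          + ENNReal.ofReal η • (ν'seq k s : Measure B))
    (vstar : S → ℝ)
    (hfix : ∀ s : S, (⨆ μ : S → ProbabilityMeasure A, ⨅ ν : S → ProbabilityMeasure B,
        Tpol γ r P μ ν vstar s) = vstar s)
    (huniq : ∀ w : S → ℝ,
        (∀ s : S, (⨆ μ : S → ProbabilityMeasure A, ⨅ ν : S → ProbabilityMeasure B,
            Tpol γ r P μ ν w s) = w s) → w = vstar)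
    :
    ∀ k : ℕ,
      ‖vVal γ r P (μseq (k + 1)) (νseq (k + 1)) - vstar‖
        ≤ (1 - η + γ * η) * ‖vVal γ r P (μseq k) (νseq k) - vstar‖ := by
  have hG : IsMarkovGame γ r P := ⟨hγ.1, hγ.2, hr, hPcont, hP0, hPsum⟩
  have hTstar : ∀ s, shapley γ r P vstar s = vstar s := hfix
  have hopt := fun k => hG.Tpol_le_of_best (hμ k)
  -- Each iterate satisfies `T v_k ≤ v_k`, hence lies above the fixed point of `T`.
  have hshap : ∀ k s, shapley γ r P (vVal γ r P (μseq k) (νseq k)) s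
      ≤ vVal γ r P (μseq k) (νseq k) s :=
    fun k s => hG.shapley_le fun μ => hopt k μ s
  have hlower : ∀ k s, vstar s ≤ vVal γ r P (μseq k) (νseq k) s := by
    intro k s
    have := nonpos_of_contracting hγ.2 (d := fun s => vstar s - vVal γ r P (μseq k) (νseq k) s)
      (fun c _ hc s => ?_) s
    · simpa using this
    · have h1 := hG.shapley_le_add (v := vstar) (w := vVal γ r P (μseq k) (νseq k)) (c := c)
        (fun s => by linarith [hc s]) s
      linarith [hTstar s, hshap k s]
  intro k
  set v := vVal γ r P (μseq k) (νseq k) with hv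
  set v₁ := vVal γ r P (μseq (k + 1)) (νseq (k + 1)) with hv₁
  -- One step of the new policies applied to the old value.
  have hstep : ∀ s, Tpol γ r P (μseq (k + 1)) (νseq (k + 1)) v s
      ≤ (1 - η) * v s + η * shapley γ r P v s := by
    intro s
    rw [hG.Tpol_mix hη.1.le hη.2 _ (hmix k s)]
    have h1 := hopt k (μseq (k + 1)) s
    have h2 := (hG.le_iSup_Tpol (μseq (k + 1)) (ν'seq k) v s).trans
      (hG.iSup_Tpol_le_shapley fun ν => hν' k ν s)
    exact add_le_add (mul_le_mul_of_nonneg_left h1 (by linarith [hη.2]))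
      (mul_le_mul_of_nonneg_left h2 hη.1.le)
  have hdecr : ∀ s, v₁ s ≤ v s := hG.vVal_le fun s => by
    have := mul_le_mul_of_nonneg_left (hshap k s) hη.1.le
    linarith [hstep s]
  have hupper : ∀ s, v₁ s ≤ (1 - η) * v s + η * shapley γ r P v s := fun s => by
    rw [hv₁, ← hG.vVal_fixed]
    exact (hG.Tpol_mono _ _ hdecr s).trans (hstep s)
  have hnorm : ∀ s, v s ≤ vstar s + ‖v - vstar‖ := fun s => by
    have h1 := (le_abs_self _).trans (norm_le_pi_norm (v - vstar) s)
    rw [Pi.sub_apply] at h1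
    linarith
  have hcoef : 0 ≤ 1 - η + γ * η := by
    linarith [hη.2, mul_nonneg hγ.1.le hη.1.le]
  refine (pi_norm_le_iff_of_nonneg (mul_nonneg hcoef (norm_nonneg _))).2 fun s => ?_
  rw [Pi.sub_apply, Real.norm_of_nonneg (by linarith [hlower (k + 1) s])]
  have h1 := mul_le_mul_of_nonneg_left (hG.shapley_le_add hnorm s) hη.1.le
  have h2 := mul_le_mul_of_nonneg_left (hnorm s) (by linarith [hη.2] : 0 ≤ 1 - η)
  rw [hTstar] at h1
  nlinarith [hupper s]
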